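/- Let K be a finite-dimensional Hopf algebra over a field with antipode S, and let I ⊆ K be a subalgebra which is a left coideal (Δ(I) ⊆ K ⊗ I) and satisfies S(I) ⊆ I. Then Δ(I) ⊆ I ⊗ I, i.e. I is a sub-bialgebra of K (hence a Hopf subalgebra). -/

import Mathlib

open TensorProduct

namespace HopfAux
open Coalgebra HopfAlgebra WithConv

variable {k K : Type*} [Field k] [Ring K] [HopfAlgebra k K]

/-- `a ↦ a ⊗ 1`. -/
noncomputable def i1 (k K : Type*) [Field k] [Ring K] [HopfAlgebra k K] : K →ₐ[k] K ⊗[k] K :=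
  Algebra.TensorProduct.includeLeft
/-- `a ↦ 1 ⊗ a`. -/
noncomputable def i2 (k K : Type*) [Field k] [Ring K] [HopfAlgebra k K] : K →ₐ[k] K ⊗[k] K :=
  Algebra.TensorProduct.includeRight

lemma i1_apply (a : K) : i1 k K a = a ⊗ₜ 1 := rfl
lemma i2_apply (a : K) : i2 k K a = 1 ⊗ₜ a := rfl

lemma conv_comp_antipode (j : K →ₐ[k] K ⊗[k] K) :
    toConv j.toLinearMap * toConv (j.toLinearMap ∘ₗ antipode k) = 1 := by
  have := LinearMap.algHom_comp_convMul_distrib (R := k) j (toConv (LinearMap.id (M := K)))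
    (toConv (antipode k (A := K)))
  rw [LinearMap.id_mul_antipode] at this
  apply WithConv.ofConv_injective
  refine Eq.trans this.symm ?_
  ext x
  simp

lemma antipode_comp_conv (j : K →ₐ[k] K ⊗[k] K) :
    toConv (j.toLinearMap ∘ₗ antipode k) * toConv j.toLinearMap = 1 := by
  have := LinearMap.algHom_comp_convMul_distrib (R := k) j (toConv (antipode k (A := K)))
    (toConv (LinearMap.id (M := K)))
  rw [LinearMap.antipode_mul_id] at this
  apply WithConv.ofConv_injective
  refine Eq.trans this.symm ?_
  ext x
  simp

lemma i1_conv_i2 : toConv (i1 k K).toLinearMap * toConv (i2 k K).toLinearMap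
    = toConv (comul (R := k) (A := K)) := by
  ext x
  rw [(ℛ k x).convMul_apply]
  simp [i1_apply, i2_apply, (ℛ k x).eq]

lemma comul_antipode_conv :
    toConv (comul (R := k) (A := K) ∘ₗ antipode k) =
    toConv ((i2 k K).toLinearMap ∘ₗ antipode k) * toConv ((i1 k K).toLinearMap ∘ₗ antipode k) := by
  symm
  refine left_inv_eq_right_inv (a := toConv (comul (R := k) (A := K))) ?_
    LinearMap.comul_right_inv
  rw [← i1_conv_i2, mul_assoc, ← mul_assoc _ (toConv (i1 k K).toLinearMap), antipode_comp_conv,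
    one_mul, antipode_comp_conv]

lemma comul_antipode (x : K) : comul (R := k) (antipode k x) =
    TensorProduct.map (antipode k) (antipode k) (TensorProduct.comm k K K (comul (R := k) x)) := by
  have := congrArg (fun f => f.ofConv x) (comul_antipode_conv (k := k) (K := K))
  refine Eq.trans this ?_
  refine ((ℛ k x).convMul_apply _ _).trans ?_
  conv_rhs => rw [← (ℛ k x).eq]
  simp [i1_apply, i2_apply]

/-- `Δ(S(u₁)) (u₂ ⊗ 1) = 1 ⊗ S(u)`. -/
lemma E1 (u : K) : ∑ i ∈ (ℛ k u).index, comul (R := k) (antipode k ((ℛ k u).left i)) *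
    ((ℛ k u).right i ⊗ₜ 1) = 1 ⊗ₜ[k] antipode k u := by
  have h : toConv (comul (R := k) (A := K) ∘ₗ antipode k) * toConv (i1 k K).toLinearMap =
     toConv ((i2 k K).toLinearMap ∘ₗ antipode k) := by
    rw [comul_antipode_conv, mul_assoc, antipode_comp_conv, mul_one]
  have := congrArg (fun f => f.ofConv u) h
  refine Eq.trans ?_ this
  exact (((ℛ k u).convMul_apply _ _).trans (by simp [i1_apply])).symm

/-- The linear map `a ⊗ w ↦ Δ(w)(a ⊗ 1)`. -/
noncomputable def Q (k K : Type*) [Field k] [Ring K] [HopfAlgebra k K] :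
    K ⊗[k] K →ₗ[k] K ⊗[k] K :=
  LinearMap.mul' k (K ⊗[k] K) ∘ₗ TensorProduct.map (comul (R := k)) (i1 k K).toLinearMap ∘ₗ
   (TensorProduct.comm k K K).toLinearMap

lemma Q_tmul (a w : K) : Q k K (a ⊗ₜ w) = comul (R := k) w * (a ⊗ₜ 1) := by
  simp [Q, i1_apply]

/-- `y₁ ⊗ y₂ S(u) = Δ(y S(u₁)) (u₂ ⊗ 1)`. -/
lemma E2 (y u : K) : comul (R := k) y * (1 ⊗ₜ[k] antipode k u) =
    ∑ i ∈ (ℛ k u).index, comul (R := k) (y * antipode k ((ℛ k u).left i)) *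
    ((ℛ k u).right i ⊗ₜ 1) := by
  simp_rw [Bialgebra.comul_mul, mul_assoc, ← Finset.mul_sum, E1]

/-- `T_f(x) = x₁ f(x₂)` -/
noncomputable def T (f : Module.Dual k K) : K →ₗ[k] K :=
  (TensorProduct.rid k K).toLinearMap ∘ₗ f.lTensor K ∘ₗ comul (R := k)

lemma comul_T (f : Module.Dual k K) (x : K) :
    comul (R := k) (T f x) = (T f).lTensor K (comul (R := k) x) := by
  have h := congrArg ((TensorProduct.rid k K).toLinearMap.lTensor K ∘ₗ (f.lTensor K).lTensor K)
    (coassoc_apply (R := k) x)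
  have e : (T f).lTensor K (comul (R := k) x) =
    ((TensorProduct.rid k K).toLinearMap.lTensor K ∘ₗ (f.lTensor K).lTensor K)
      (comul.lTensor K (comul (R := k) x)) := by
    simp only [T, LinearMap.lTensor_comp, LinearMap.comp_apply]
  rw [e, ← h, T]
  simp only [LinearMap.comp_apply]
  generalize comul (R := k) x = z
  induction z with
  | zero => simp
  | add a b ha hb => simp only [map_add, ha, hb]
  | tmul a b =>
    simp only [LinearMap.lTensor_tmul, LinearMap.rTensor_tmul, LinearEquiv.coe_coe, rid_tmul,
      map_smul]
    generalize comul (R := k) a = z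
    induction z with
    | zero => simp
    | add a b ha hb => simp only [map_add, ha, hb, smul_add, add_tmul]
    | tmul a c => simp

section fin
variable {ι : Type*} [Fintype ι] [DecidableEq ι] (b : Module.Basis ι k K)

lemma trace_sum (F : K →ₗ[k] K) : LinearMap.trace k K F = ∑ i, b.coord i (F (b i)) := by
  rw [LinearMap.trace_eq_matrix_trace k b]
  simp [Matrix.trace, LinearMap.toMatrix_apply]

lemma trace_sum2 (F : K ⊗[k] K →ₗ[k] K ⊗[k] K) : LinearMap.trace k _ F =
    ∑ i, ∑ j, b.coord j ((TensorProduct.lid k K) ((b.coord i).rTensor K (F (b i ⊗ₜ b j)))) := by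
  rw [LinearMap.trace_eq_matrix_trace k (b.tensorProduct b)]
  simp only [Matrix.trace, Matrix.diag, LinearMap.toMatrix_apply, Fintype.sum_prod_type,
    Module.Basis.tensorProduct_apply]
  refine Finset.sum_congr rfl fun i _ => Finset.sum_congr rfl fun j _ => ?_
  generalize F (b i ⊗ₜ b j) = z
  induction z with
  | zero => simp
  | add a c ha hc => simp only [map_add, Finsupp.add_apply, ha, hc]
  | tmul a c => simp [mul_comm]

lemma contract (l : Module.Dual k K) (z : K ⊗[k] K) :
    ∑ i, l (b i) • (TensorProduct.lid k K) ((b.coord i).rTensor K z) =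
      TensorProduct.lid k K (l.rTensor K z) := by
  induction z with
  | zero => simp
  | add a c ha hc => simp only [map_add, smul_add, Finset.sum_add_distrib, ha, hc]
  | tmul a c =>
    simp only [LinearMap.rTensor_tmul, lid_tmul, smul_smul, ← Finset.sum_smul]
    congr 1
    conv_rhs => rw [← b.sum_repr a, map_sum]
    simp only [map_smul, smul_eq_mul, Module.Basis.coord_apply, mul_comm]
end fin

/-- `S²` -/
noncomputable abbrev S2 (k K : Type*) [Field k] [Ring K] [HopfAlgebra k K] : K →ₗ[k] K :=
  antipode k ∘ₗ antipode k

/-- The Larson–Sweedler candidate integral. -/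
noncomputable def lam (f : Module.Dual k K) : Module.Dual k K :=
  LinearMap.trace k K ∘ₗ (LinearMap.llcomp k K K K (T f)) ∘ₗ
    (LinearMap.lcomp k K (S2 k K)) ∘ₗ LinearMap.mul k K

lemma lam_apply (f : Module.Dual k K) (y : K) :
    lam f y = LinearMap.trace k K (T f ∘ₗ LinearMap.mulLeft k y ∘ₗ S2 k K) := rfl

lemma exists_lam_ne [FiniteDimensional k K] [Nontrivial K] :
    ∃ (f : Module.Dual k K) (y : K), lam f y ≠ 0 := by
  by_contra! H
  let b := Module.finBasis k K
  let B : K ⊗[k] K →ₗ[k] K := antipode k ∘ₗ LinearMap.mul' k K ∘ₗ (antipode k).rTensor K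
  have h1 : B ∘ₗ comul (R := k) = LinearMap.smulRight (counit (R := k)) (1 : K) := by
    ext x
    simp only [B, LinearMap.comp_apply, mul_antipode_rTensor_comul_apply]
    simp [Algebra.algebraMap_eq_smul_one]
  have h2 := LinearMap.trace_comp_comm' (R := k) (comul (R := k) (A := K)) B
  rw [h1, trace_sum2 b, trace_sum b, Finset.sum_comm] at h2
  have h3 : ∑ i, b.coord i (LinearMap.smulRight (counit (R := k)) (1 : K) (b i)) = 1 := by
    have : counit (R := k) (∑ i, b.repr (1:K) i • b i) = 1 := by rw [b.sum_repr]; simp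
    rw [map_sum] at this
    rw [← this]
    simp [mul_comm]
  rw [h3] at h2
  apply one_ne_zero (α := k)
  rw [h2]
  refine Finset.sum_eq_zero fun i _ => ?_
  rw [← H (b.coord i) (antipode k (b i)), lam_apply, trace_sum b]
  refine Finset.sum_congr rfl fun j _ => ?_
  simp only [LinearMap.comp_apply, B, LinearMap.rTensor_tmul, LinearMap.mul'_apply,
    antipode_mul_antidistrib, T, LinearMap.mulLeft_apply]
  generalize comul (R := k) (antipode k (b i) * antipode k (antipode k (b j))) = z
  induction z with
  | zero => simp
  | add a c ha hc => simp only [map_add, ha, hc]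
  | tmul a c => simp [mul_comm]

lemma lam_coinv [FiniteDimensional k K] (f g : Module.Dual k K) (y : K) :
    TensorProduct.lid k k (TensorProduct.map g (lam f) (comul (R := k) y)) = g 1 * lam f y := by
  let b := Module.finBasis k K
  let W : K →ₗ[k] K := T f ∘ₗ LinearMap.mulLeft k y ∘ₗ S2 k K
  let C : K ⊗[k] K →ₗ[k] K := (TensorProduct.lid k K).toLinearMap ∘ₗ g.rTensor K ∘ₗ Q k K ∘ₗ
    (antipode k).rTensor K
  have hC : ∀ w : K, ∑ i, (TensorProduct.lid k K) ((b.coord i).rTensor K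
      (comul (R := k) (C (b i ⊗ₜ w)))) = g 1 • w := by
    intro w
    let F : K ⊗[k] (K ⊗[k] K) →ₗ[k] K := (TensorProduct.lid k K).toLinearMap ∘ₗ
      (g ∘ₗ LinearMap.mul' k K ∘ₗ (antipode k).lTensor K).rTensor K ∘ₗ
        (TensorProduct.assoc k K K K).symm.toLinearMap
    have h1 : F (comul.lTensor K (comul (R := k) w)) = g 1 • w := by
      simp only [F, LinearMap.comp_apply, LinearEquiv.coe_coe, coassoc_symm_apply]
      rw [← LinearMap.comp_apply (LinearMap.rTensor K _), ← LinearMap.rTensor_comp]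
      have : (g ∘ₗ LinearMap.mul' k K ∘ₗ (antipode k).lTensor K) ∘ₗ comul (R := k) =
          g 1 • counit (R := k) := by
        ext x
        simp only [LinearMap.comp_apply, mul_antipode_lTensor_comul_apply]
        simp [Algebra.algebraMap_eq_smul_one, mul_comm]
      rw [this, LinearMap.rTensor_smul, LinearMap.smul_apply, rTensor_counit_comul]
      simp
    rw [← h1]
    simp only [C, LinearMap.comp_apply, LinearMap.rTensor_tmul, Q_tmul]
    generalize comul (R := k) w = z
    induction z with
    | zero => simp
    | add a c ha hc => simp only [map_add, add_mul, Finset.sum_add_distrib, ha, hc]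
    | tmul p q =>
      simp only [Algebra.TensorProduct.tmul_mul_tmul, mul_one, LinearMap.rTensor_tmul,
        LinearEquiv.coe_coe, lid_tmul, map_smul, LinearMap.lTensor_tmul]
      refine (contract b (g ∘ₗ LinearMap.mulLeft k p ∘ₗ antipode k) _).trans ?_
      generalize comul (R := k) q = z
      induction z with
      | zero => simp
      | add a c ha hc => simp only [map_add, tmul_add, ha, hc]
      | tmul a c => simp [F]
  have h2 : LinearMap.trace k K (C ∘ₗ W.lTensor K ∘ₗ comul (R := k)) = g 1 * lam f y := by
    rw [← LinearMap.comp_assoc, LinearMap.trace_comp_comm', trace_sum2 b, Finset.sum_comm,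
      lam_apply, trace_sum b, Finset.mul_sum]
    refine Finset.sum_congr rfl fun j _ => ?_
    rw [← map_sum]
    simp only [LinearMap.comp_apply, LinearMap.lTensor_tmul]
    rw [hC]
    simp [W]
  rw [← h2]
  have h3 : C ∘ₗ W.lTensor K ∘ₗ comul (R := k) =
      ∑ i ∈ (ℛ k y).index, g ((ℛ k y).left i) • (T f ∘ₗ LinearMap.mulLeft k ((ℛ k y).right i) ∘ₗ
        S2 k K) := by
    ext a
    -- right-hand side
    have r : (∑ i ∈ (ℛ k y).index, g ((ℛ k y).left i) • (T f ∘ₗ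
        LinearMap.mulLeft k ((ℛ k y).right i) ∘ₗ S2 k K)) a =
        TensorProduct.lid k K (TensorProduct.map g (T f)
          (comul (R := k) y * (1 ⊗ₜ[k] antipode k (antipode k a)))) := by
      conv_rhs => rw [← (ℛ k y).eq]
      simp [Finset.sum_mul]
    have e : comul (R := k) y * (1 ⊗ₜ[k] antipode k (antipode k a)) =
        Q k K ((TensorProduct.map (antipode k) (LinearMap.mulLeft k y ∘ₗ S2 k K))
          (comul (R := k) a)) := by
      have q : ∀ u, comul (R := k) y * (1 ⊗ₜ[k] antipode k u) =
         Q k K (TensorProduct.comm k K K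
          ((LinearMap.mulLeft k y ∘ₗ antipode k).rTensor K (comul (R := k) u))) := by
        intro u
        rw [E2]
        conv_rhs => rw [← (ℛ k u).eq]
        simp [Q_tmul]
      rw [q, comul_antipode]
      congr 1
      generalize comul (R := k) a = z
      induction z with
      | zero => simp
      | add a c ha hc => simp only [map_add, ha, hc]
      | tmul a c => simp
    rw [r, e]
    simp only [LinearMap.comp_apply, C]
    generalize comul (R := k) a = z
    induction z with
    | zero => simp
    | add a c ha hc => simp only [map_add, ha, hc]
    | tmul a c =>
      simp only [LinearMap.lTensor_tmul, LinearMap.rTensor_tmul, map_tmul, Q_tmul, W,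
        LinearMap.comp_apply, comul_T]
      generalize comul (R := k) (LinearMap.mulLeft k y (antipode k (antipode k c))) = z
      induction z with
      | zero => simp
      | add a c ha hc => simp only [map_add, add_mul, ha, hc]
      | tmul p q => simp
  rw [h3, map_sum]
  conv_lhs => rw [← (ℛ k y).eq]
  simp [lam_apply]

lemma antipode_injective [FiniteDimensional k K] :
    Function.Injective (antipode k (A := K)) := by
  cases subsingleton_or_nontrivial K
  · exact Function.injective_of_subsingleton _
  obtain ⟨f, y₀, hy⟩ := exists_lam_ne (k := k) (K := K)
  set l := lam f with hl
  rw [injective_iff_map_eq_zero]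
  intro h hh
  let b := Module.finBasis k K
  -- the components of `S(h₁) ⊗ h₂`
  let t : Fin _ → K := fun i => TensorProduct.rid k K ((b.coord i).lTensor K
    ((antipode k).rTensor K (comul (R := k) h)))
  have ht : (antipode k).rTensor K (comul (R := k) h) = ∑ i, t i ⊗ₜ b i := by
    simp only [t]
    generalize (antipode k).rTensor K (comul (R := k) h) = z
    induction z with
    | zero => simp
    | add a c ha hc => simp only [map_add, add_tmul, Finset.sum_add_distrib, ← ha, ← hc]
    | tmul a c =>
      conv_lhs => rw [← b.sum_repr c, tmul_sum]
      simp [smul_tmul]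
  have hl0 : ∀ y i, l (y * t i) = 0 := by
    intro y i
    have h1 := E2 (k := k) y h
    rw [hh, tmul_zero, mul_zero] at h1
    have h2 := congrArg (fun z => TensorProduct.lid k k (TensorProduct.map (b.coord i) l z)) h1
    simp only [map_zero, map_sum] at h2
    have h3 : ∀ x c : K, TensorProduct.lid k k (TensorProduct.map (b.coord i) l
        (comul (R := k) x * (c ⊗ₜ 1))) = b.coord i c * l x := by
      intro x c
      have := lam_coinv f (b.coord i ∘ₗ LinearMap.mulRight k c) x
      simp only [LinearMap.comp_apply, LinearMap.mulRight_apply, one_mul] at this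
      rw [hl, ← this]
      generalize comul (R := k) x = z
      induction z with
      | zero => simp
      | add a c ha hc => simp only [map_add, add_mul, ha, hc]
      | tmul p q => simp
    simp only [h3] at h2
    simp only [t]
    conv_lhs => rw [← (ℛ k h).eq]
    rw [h2]
    simp [Finset.mul_sum]
  -- `S(h₁) ⊗ h₂ ↦ S²(h₂) S(h₁) ⊗ h₃`
  let M : K ⊗[k] (K ⊗[k] K) →ₗ[k] K :=
    (TensorProduct.lid k K).toLinearMap ∘ₗ (l ∘ₗ LinearMap.mulLeft k y₀ ∘ₗ antipode k ∘ₗ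
      LinearMap.mul' k K ∘ₗ (antipode k).lTensor K).rTensor K ∘ₗ
        (TensorProduct.assoc k K K K).symm.toLinearMap
  have h1 : M (comul.lTensor K (comul (R := k) h)) = l y₀ • h := by
    simp only [M, LinearMap.comp_apply, LinearEquiv.coe_coe, coassoc_symm_apply]
    rw [← LinearMap.comp_apply (LinearMap.rTensor K _), ← LinearMap.rTensor_comp]
    have : (l ∘ₗ LinearMap.mulLeft k y₀ ∘ₗ antipode k ∘ₗ
      LinearMap.mul' k K ∘ₗ (antipode k).lTensor K) ∘ₗ comul (R := k) =
        l y₀ • counit (R := k) := by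
      ext x
      simp only [LinearMap.comp_apply, mul_antipode_lTensor_comul_apply]
      simp [Algebra.algebraMap_eq_smul_one, mul_comm]
    rw [this, LinearMap.rTensor_smul, LinearMap.smul_apply, rTensor_counit_comul]
    simp
  let M' : K ⊗[k] (K ⊗[k] K) →ₗ[k] K :=
    (TensorProduct.lid k K).toLinearMap ∘ₗ (l ∘ₗ LinearMap.mulLeft k y₀ ∘ₗ
      LinearMap.mul' k K ∘ₗ (TensorProduct.comm k K K).toLinearMap ∘ₗ
       (S2 k K).lTensor K).rTensor K ∘ₗ
        (TensorProduct.assoc k K K K).symm.toLinearMap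
  have h2 : M (comul.lTensor K (comul (R := k) h)) = M' (comul.lTensor K
      ((antipode k).rTensor K (comul (R := k) h))) := by
    generalize comul (R := k) h = z
    induction z with
    | zero => simp
    | add a c ha hc => simp only [map_add, ha, hc]
    | tmul p q =>
      simp only [LinearMap.lTensor_tmul, LinearMap.rTensor_tmul]
      generalize comul (R := k) q = z
      induction z with
      | zero => simp
      | add a c ha hc => simp only [map_add, tmul_add, ha, hc]
      | tmul a c => simp [M, M', antipode_mul_antidistrib]
  rw [ht, map_sum, map_sum, h1] at h2
  have h3 : ∀ i, M' (comul.lTensor K (t i ⊗ₜ b i)) = 0 := by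
    intro i
    simp only [LinearMap.lTensor_tmul]
    generalize comul (R := k) (b i) = z
    induction z with
    | zero => simp
    | add a c ha hc => simp only [map_add, tmul_add, ha, hc, add_zero]
    | tmul a c => simp [M', ← mul_assoc, hl0]
  simp only [h3, Finset.sum_const_zero] at h2
  exact (smul_eq_zero.mp h2).resolve_left hy

end HopfAux

theorem stmt11 (k : Type*) [Field k] (K : Type*) [Ring K] [HopfAlgebra k K]
    [FiniteDimensional k K] (I : Subalgebra k K)
    (hcoideal : ∀ x ∈ I, Coalgebra.comul (R := k) x ∈
      LinearMap.range (TensorProduct.map (LinearMap.id : K →ₗ[k] K)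
        (Subalgebra.toSubmodule I).subtype))
    (hS : ∀ x ∈ I, HopfAlgebra.antipode (R := k) x ∈ I) :
    ∀ x ∈ I, Coalgebra.comul (R := k) x ∈
      LinearMap.range (TensorProduct.map (Subalgebra.toSubmodule I).subtype
        (Subalgebra.toSubmodule I).subtype) := by
  intro x hx
  obtain ⟨p, hp⟩ := LinearMap.exists_leftInverse_of_injective
    (Subalgebra.toSubmodule I).subtype (Submodule.ker_subtype _)
  have hp' : ∀ a : Subalgebra.toSubmodule I, p (a : K) = a := fun a => LinearMap.congr_fun hp a
  let r : (Subalgebra.toSubmodule I) →ₗ[k] (Subalgebra.toSubmodule I) :=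
    (HopfAlgebra.antipode k).restrict (fun a ha => hS a ha)
  have hr : Function.Injective r := by
    intro a c hac
    apply Subtype.ext
    apply HopfAux.antipode_injective (k := k)
    exact congrArg Subtype.val hac
  obtain ⟨⟨y, hy⟩, hyx⟩ := (LinearMap.injective_iff_surjective.mp hr) ⟨x, hx⟩
  have hyx' : HopfAlgebra.antipode k y = x := congrArg Subtype.val hyx
  -- right component
  have h1 : TensorProduct.map LinearMap.id ((Subalgebra.toSubmodule I).subtype ∘ₗ p)
      (Coalgebra.comul (R := k) x) = Coalgebra.comul (R := k) x := by
    obtain ⟨z, hz⟩ := hcoideal x hx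
    rw [← hz, ← LinearMap.comp_apply, ← TensorProduct.map_comp, LinearMap.comp_assoc, hp]
    rfl
  have h2 : TensorProduct.map ((Subalgebra.toSubmodule I).subtype ∘ₗ p) LinearMap.id
      (Coalgebra.comul (R := k) x) = Coalgebra.comul (R := k) x := by
    obtain ⟨z, hz⟩ := hcoideal y hy
    rw [← hyx', HopfAux.comul_antipode, ← hz]
    clear hz
    induction z with
    | zero => simp
    | add a c ha hc => simp only [map_add, ha, hc]
    | tmul a c =>
      have := hp' ⟨HopfAlgebra.antipode k (c : K), hS _ c.2⟩
      simp only [TensorProduct.map_tmul, TensorProduct.comm_tmul, LinearMap.comp_apply,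
        Submodule.subtype_apply, LinearMap.id_apply]
      simp only at this
      rw [this]
  refine ⟨TensorProduct.map p p (Coalgebra.comul (R := k) x), ?_⟩
  rw [← LinearMap.comp_apply, ← TensorProduct.map_comp]
  conv_rhs => rw [← h2, ← h1]
  rw [← LinearMap.comp_apply (TensorProduct.map _ LinearMap.id), ← TensorProduct.map_comp,
    LinearMap.comp_id, LinearMap.id_comp]
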